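/- arXiv:math-ph/0603028 — 6 statements merged into one kernel-verified Lean document; each statement's English description precedes it below -/
import Mathlib

section
/- Let (ρ,C) be local Lie algebroid data on ℝ^n with fiber ℝ^m, let L : ℝ^n × ℝ^m → ℝ be C², and let (x,y) : [t₀,t₁] → ℝ^n × ℝ^m be an admissible C¹ curve. Then the following are equivalent: (a) for every C¹ map σ : [t₀,t₁] → ℝ^m with σ(t₀) = 0 and σ(t₁) = 0 one has ∫_{t₀}^{t₁} [ Σ_{i,α} ∂L/∂x^i(x(t),y(t)) ρ^i_α(x(t)) σ^α(t) + Σ_α ∂L/∂y^α(x(t),y(t)) ( (σ^α)'(t) + Σ_{β,γ} C^α_{βγ}(x(t)) y^β(t) σ^γ(t) ) ] dt = 0; (b) (x,y) is a solution of Lagrange's equations, i.e. EL_α(t) = 0 for every α and every t ∈ [t₀,t₁]. (This is the local-coordinate form of the theorem that the critical points of the action functional S = ∫ L, with respect to all admissible variations δx^i = Σ_α ρ^i_α σ^α, δy^α = (σ^α)' + Σ_{β,γ} C^α_{βγ} y^β σ^γ with σ vanishing at the endpoints, are exactly the solutions of Lagrange's equations on the Lie algebroid.) -/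
/-!
Write `p_α(t) = ∂L/∂y^α(x(t), y(t))`. Since `L` is C² and the curve is C¹, `p_α` is C¹, so
`EL_α` is continuous. By the product rule and the antisymmetry of `C` in its lower indices,
the integrand of the first variation equals
`d/dt (Σ_α p_α σ^α) - Σ_α EL_α σ^α` pointwise (`integrand_eq`). As `σ` vanishes at both
endpoints, the first variation is `-∫ Σ_α EL_α σ^α` (`first_variation_eq`), which gives
(b) ⇒ (a). For (a) ⇒ (b), testing against `σ = g e_α` with `g` a smooth bump function
supported in `(t₀, t₁)`, the fundamental lemma of the calculus of variations gives `EL_α = 0`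
almost everywhere on `(t₀, t₁)`, hence on all of `[t₀, t₁]` by continuity.
-/

open Set

/-- Partial derivative of a scalar function on `ℝ^n` in the `j`-th coordinate direction. -/
noncomputable def pderiv' {n : ℕ} (f : (Fin n → ℝ) → ℝ) (x : Fin n → ℝ) (j : Fin n) : ℝ :=
  deriv (fun s => f (Function.update x j s)) (x j)

/-- Local Lie algebroid data on `ℝ^n` with fiber `ℝ^m`: smooth anchor coefficients
`ρ^i_α` and smooth structure functions `C^α_{βγ}`, antisymmetric in the lower indices. -/
structure LocalAlgebroidData (n m : ℕ) where
  ρ : (Fin n → ℝ) → Fin n → Fin m → ℝ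
  C : (Fin n → ℝ) → Fin m → Fin m → Fin m → ℝ
  smooth_ρ : ContDiff ℝ (⊤ : ℕ∞) ρ
  smooth_C : ContDiff ℝ (⊤ : ℕ∞) C
  antisymm : ∀ x α β γ, C x α β γ = - C x α γ β

/-- Partial derivative `∂L/∂x^i` of a Lagrangian `L : ℝ^n × ℝ^m → ℝ`. -/
noncomputable def pLx {n m : ℕ} (L : (Fin n → ℝ) × (Fin m → ℝ) → ℝ)
    (x : Fin n → ℝ) (y : Fin m → ℝ) (i : Fin n) : ℝ :=
  pderiv' (fun z => L (z, y)) x i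

/-- Partial derivative `∂L/∂y^α` of a Lagrangian `L : ℝ^n × ℝ^m → ℝ`. -/
noncomputable def pLy {n m : ℕ} (L : (Fin n → ℝ) × (Fin m → ℝ) → ℝ)
    (x : Fin n → ℝ) (y : Fin m → ℝ) (α : Fin m) : ℝ :=
  pderiv' (fun w => L (x, w)) y α

/-- The Euler–Lagrange expression
`EL_α(t) = d/dt[∂L/∂y^α] + Σ_{β,γ} C^γ_{αβ} y^β ∂L/∂y^γ − Σ_i ρ^i_α ∂L/∂x^i`
of a curve `(x,y)`. -/
noncomputable def ELexpr {n m : ℕ} (A : LocalAlgebroidData n m)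
    (L : (Fin n → ℝ) × (Fin m → ℝ) → ℝ)
    (x : ℝ → Fin n → ℝ) (y : ℝ → Fin m → ℝ) (α : Fin m) (t : ℝ) : ℝ :=
  deriv (fun s => pLy L (x s) (y s) α) t
    + ∑ β, ∑ γ, A.C (x t) γ α β * y t β * pLy L (x t) (y t) γ
    - ∑ i, A.ρ (x t) i α * pLx L (x t) (y t) i

open MeasureTheory

lemma pLx_eq_fderiv {n m : ℕ} {L : (Fin n → ℝ) × (Fin m → ℝ) → ℝ} (hL : Differentiable ℝ L)
    (x : Fin n → ℝ) (y : Fin m → ℝ) (i : Fin n) :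
    pLx L x y i = fderiv ℝ L (x, y) (Pi.single i 1, 0) := by
  have h1 : HasDerivAt (fun s => (Function.update x i s, y)) (Pi.single i (1 : ℝ), 0) (x i) :=
    (hasDerivAt_update x i (x i)).prodMk (hasDerivAt_const (x i) y)
  have h2 : HasFDerivAt L (fderiv ℝ L (x, y)) (Function.update x i (x i), y) := by
    rw [Function.update_eq_self]
    exact (hL (x, y)).hasFDerivAt
  exact (h2.comp_hasDerivAt (x i) h1).deriv

lemma pLy_eq_fderiv {n m : ℕ} {L : (Fin n → ℝ) × (Fin m → ℝ) → ℝ} (hL : Differentiable ℝ L)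
    (x : Fin n → ℝ) (y : Fin m → ℝ) (α : Fin m) :
    pLy L x y α = fderiv ℝ L (x, y) (0, Pi.single α 1) := by
  have h1 : HasDerivAt (fun s => (x, Function.update y α s)) (0, Pi.single α (1 : ℝ)) (y α) :=
    (hasDerivAt_const (y α) x).prodMk (hasDerivAt_update y α (y α))
  have h2 : HasFDerivAt L (fderiv ℝ L (x, y)) (x, Function.update y α (y α)) := by
    rw [Function.update_eq_self]
    exact (hL (x, y)).hasFDerivAt
  exact (h2.comp_hasDerivAt (y α) h1).deriv

section Curve

variable {n m : ℕ} {L : (Fin n → ℝ) × (Fin m → ℝ) → ℝ}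
  {x : ℝ → Fin n → ℝ} {y : ℝ → Fin m → ℝ}

lemma contDiff_pLy_curve (hL : ContDiff ℝ 2 L) (hx : ContDiff ℝ 1 x) (hy : ContDiff ℝ 1 y)
    (α : Fin m) : ContDiff ℝ 1 (fun t => pLy L (x t) (y t) α) := by
  simp_rw [pLy_eq_fderiv (hL.differentiable (by norm_num))]
  have h : ContDiff ℝ 1 (fderiv ℝ L) := hL.fderiv_right (by norm_num)
  exact (h.comp (hx.prodMk hy)).clm_apply contDiff_const

lemma continuous_pLx_curve (hL : ContDiff ℝ 2 L) (hx : ContDiff ℝ 1 x) (hy : ContDiff ℝ 1 y)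
    (i : Fin n) : Continuous (fun t => pLx L (x t) (y t) i) := by
  simp_rw [pLx_eq_fderiv (hL.differentiable (by norm_num))]
  have h : ContDiff ℝ 1 (fderiv ℝ L) := hL.fderiv_right (by norm_num)
  exact ((h.comp (hx.prodMk hy)).clm_apply contDiff_const).continuous

lemma continuous_ELexpr (A : LocalAlgebroidData n m) (hL : ContDiff ℝ 2 L)
    (hx : ContDiff ℝ 1 x) (hy : ContDiff ℝ 1 y) (α : Fin m) :
    Continuous (ELexpr A L x y α) := by
  have hp := contDiff_pLy_curve hL hx hy
  have hd : Continuous (deriv (fun s => pLy L (x s) (y s) α)) :=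
    (hp α).continuous_deriv le_rfl
  have hpc := fun γ => (hp γ).continuous
  have hqc := continuous_pLx_curve hL hx hy
  have hρ : Continuous (fun t => A.ρ (x t)) := A.smooth_ρ.continuous.comp hx.continuous
  have hC : Continuous (fun t => A.C (x t)) := A.smooth_C.continuous.comp hx.continuous
  have hyc := hy.continuous
  unfold ELexpr
  fun_prop

/-- The product rule, combined with the antisymmetry of `C`, rewrites the integrand of the first
variation as a total derivative minus the pairing of `EL` with `σ`. -/
lemma integrand_eq (A : LocalAlgebroidData n m) (hL : ContDiff ℝ 2 L)
    (hx : ContDiff ℝ 1 x) (hy : ContDiff ℝ 1 y) {σ : ℝ → Fin m → ℝ} (hσ : ContDiff ℝ 1 σ)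
    (t : ℝ) :
    (∑ i, ∑ α, pLx L (x t) (y t) i * A.ρ (x t) i α * σ t α)
        + ∑ α, pLy L (x t) (y t) α *
            (deriv (fun s => σ s α) t + ∑ β, ∑ γ, A.C (x t) α β γ * y t β * σ t γ)
      = deriv (fun s => ∑ α, pLy L (x s) (y s) α * σ s α) t
        - ∑ α, ELexpr A L x y α t * σ t α := by
  have hp := fun α => (contDiff_pLy_curve hL hx hy α).differentiable (by norm_num) t
  have hs : ∀ α, DifferentiableAt ℝ (fun s => σ s α) t := fun α =>
    (contDiff_pi.1 hσ α).differentiable (by norm_num) t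
  have hderiv : deriv (fun s => ∑ α, pLy L (x s) (y s) α * σ s α) t
      = ∑ α, (deriv (fun s => pLy L (x s) (y s) α) t * σ t α
          + pLy L (x t) (y t) α * deriv (fun s => σ s α) t) :=
    (HasDerivAt.fun_sum fun α _ => (hp α).hasDerivAt.mul (hs α).hasDerivAt).deriv
  have hρ : ∑ i, ∑ α, pLx L (x t) (y t) i * A.ρ (x t) i α * σ t α
      = ∑ α, (∑ i, A.ρ (x t) i α * pLx L (x t) (y t) i) * σ t α := by
    rw [Finset.sum_comm]
    refine Finset.sum_congr rfl fun α _ => ?_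
    rw [Finset.sum_mul]
    exact Finset.sum_congr rfl fun i _ => by ring
  have hC : ∑ α, pLy L (x t) (y t) α * ∑ β, ∑ γ, A.C (x t) α β γ * y t β * σ t γ
      = -∑ α, (∑ β, ∑ γ, A.C (x t) γ α β * y t β * pLy L (x t) (y t) γ) * σ t α := by
    simp_rw [Finset.mul_sum, Finset.sum_mul, ← Finset.sum_neg_distrib]
    -- The index triple `(α, β, γ)` on the left is renamed to `(γ, β, α)` on the right.
    calc _ = ∑ α, ∑ γ, ∑ β, pLy L (x t) (y t) α * (A.C (x t) α β γ * y t β * σ t γ) :=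
          Finset.sum_congr rfl fun α _ => Finset.sum_comm
      _ = ∑ γ, ∑ α, ∑ β, pLy L (x t) (y t) α * (A.C (x t) α β γ * y t β * σ t γ) :=
          Finset.sum_comm
      _ = ∑ γ, ∑ β, ∑ α, pLy L (x t) (y t) α * (A.C (x t) α β γ * y t β * σ t γ) :=
          Finset.sum_congr rfl fun γ _ => Finset.sum_comm
      _ = _ := by
          refine Finset.sum_congr rfl fun γ _ => Finset.sum_congr rfl fun β _ =>
            Finset.sum_congr rfl fun α _ => ?_
          rw [A.antisymm (x t) α β γ]
          ring
  rw [hderiv, hρ]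
  simp_rw [mul_add, Finset.sum_add_distrib]
  rw [hC]
  simp only [ELexpr, sub_mul, add_mul, Finset.sum_add_distrib, Finset.sum_sub_distrib]
  ring

/-- Integration by parts: the boundary term drops out because `σ` vanishes at the endpoints. -/
lemma first_variation_eq (A : LocalAlgebroidData n m) (hL : ContDiff ℝ 2 L)
    (hx : ContDiff ℝ 1 x) (hy : ContDiff ℝ 1 y) {t₀ t₁ : ℝ} {σ : ℝ → Fin m → ℝ}
    (hσ : ContDiff ℝ 1 σ) (h₀ : σ t₀ = 0) (h₁ : σ t₁ = 0) :
    ∫ t in t₀..t₁,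
        ((∑ i, ∑ α, pLx L (x t) (y t) i * A.ρ (x t) i α * σ t α)
          + ∑ α, pLy L (x t) (y t) α *
              (deriv (fun s => σ s α) t
                + ∑ β, ∑ γ, A.C (x t) α β γ * y t β * σ t γ))
      = -∫ t in t₀..t₁, ∑ α, ELexpr A L x y α t * σ t α := by
  simp_rw [integrand_eq A hL hx hy hσ]
  have hP : ContDiff ℝ 1 (fun s => ∑ α, pLy L (x s) (y s) α * σ s α) :=
    ContDiff.sum fun α _ => (contDiff_pLy_curve hL hx hy α).mul (contDiff_pi.1 hσ α)
  have hP' := hP.continuous_deriv le_rfl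
  have hE := continuous_ELexpr A hL hx hy
  have hσc := hσ.continuous
  have hEσ : Continuous (fun t => ∑ α, ELexpr A L x y α t * σ t α) := by fun_prop
  rw [intervalIntegral.integral_sub (hP'.intervalIntegrable _ _) (hEσ.intervalIntegrable _ _),
    intervalIntegral.integral_deriv_eq_sub (fun t _ => hP.differentiable (by norm_num) t)
      (hP'.intervalIntegrable _ _)]
  simp [h₀, h₁]

end Curve

/-- **Variational characterization of Lagrange's equations on a Lie algebroid
(local coordinate form).**  For an admissible C¹ curve `(x,y)` and a C² Lagrangian `L`,
the first variation of the action `∫ L` vanishes for all admissible variations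
`δx^i = Σ_α ρ^i_α σ^α`, `δy^α = (σ^α)' + Σ_{β,γ} C^α_{βγ} y^β σ^γ` with `σ` vanishing at
the endpoints, if and only if `(x,y)` is a solution of Lagrange's equations. -/
theorem variational_characterization_of_lagrange_equations
    {n m : ℕ} (A : LocalAlgebroidData n m)
    (L : (Fin n → ℝ) × (Fin m → ℝ) → ℝ) (hL : ContDiff ℝ 2 L)
    (t₀ t₁ : ℝ) (ht : t₀ < t₁)
    (x : ℝ → Fin n → ℝ) (y : ℝ → Fin m → ℝ)
    (hx : ContDiff ℝ 1 x) (hy : ContDiff ℝ 1 y)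
    (hadm : ∀ t ∈ Icc t₀ t₁, ∀ i,
      deriv (fun s => x s i) t = ∑ α, A.ρ (x t) i α * y t α) :
    (∀ σ : ℝ → Fin m → ℝ, ContDiff ℝ 1 σ → σ t₀ = 0 → σ t₁ = 0 →
      ∫ t in t₀..t₁,
        ((∑ i, ∑ α, pLx L (x t) (y t) i * A.ρ (x t) i α * σ t α)
          + ∑ α, pLy L (x t) (y t) α *
              (deriv (fun s => σ s α) t
                + ∑ β, ∑ γ, A.C (x t) α β γ * y t β * σ t γ)) = 0)
    ↔ (∀ α, ∀ t ∈ Icc t₀ t₁, ELexpr A L x y α t = 0) := by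
  have key := fun σ hσ h₀ h₁ =>
    first_variation_eq A hL hx hy (t₀ := t₀) (t₁ := t₁) (σ := σ) hσ h₀ h₁
  constructor
  · intro h α
    have hE := continuous_ELexpr A hL hx hy α
    have hae : ∀ᵐ t : ℝ, t ∈ Ioo t₀ t₁ → ELexpr A L x y α t = 0 := by
      refine isOpen_Ioo.ae_eq_zero_of_integral_contDiff_smul_eq_zero
        (hE.locallyIntegrable.locallyIntegrableOn _) fun g hg _ hgs => ?_
      have hg0 : ∀ t ∉ Ioo t₀ t₁, g t = 0 := fun t ht' =>
        image_eq_zero_of_notMem_tsupport fun h' => ht' (hgs h')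
      have hσ : ContDiff ℝ 1 (fun t => (Pi.single α (g t) : Fin m → ℝ)) :=
        (ContinuousLinearMap.single ℝ (fun _ : Fin m => ℝ) α).contDiff.comp
          (hg.of_le (by exact_mod_cast le_top))
      have h₀ := h _ hσ (by simp [hg0 t₀ (by simp)]) (by simp [hg0 t₁ (by simp)])
      rw [key _ hσ (by simp [hg0 t₀ (by simp)]) (by simp [hg0 t₁ (by simp)]), neg_eq_zero] at h₀
      simp only [Pi.single_apply, mul_ite, mul_zero, Finset.sum_ite_eq', Finset.mem_univ,
        if_true] at h₀
      rw [intervalIntegral.integral_of_le ht.le, setIntegral_eq_integral_of_forall_compl_eq_zero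
        fun t ht' => by rw [hg0 t fun h' => ht' (Ioo_subset_Ioc_self h'), mul_zero]] at h₀
      simpa [mul_comm] using h₀
    have hae' : ELexpr A L x y α =ᵐ[volume.restrict (Icc t₀ t₁)] fun _ => 0 := by
      rw [← Measure.restrict_congr_set Ioo_ae_eq_Icc]
      exact (ae_restrict_iff' measurableSet_Ioo).2 hae
    exact Measure.eqOn_Icc_of_ae_eq volume ht.ne hae' hE.continuousOn continuousOn_const
  · intro h σ hσ h₀ h₁
    rw [key σ hσ h₀ h₁, neg_eq_zero]
    refine (intervalIntegral.integral_congr (g := fun _ => 0) fun t ht' => ?_).trans (by simp)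
    rw [uIcc_of_le ht.le] at ht'
    exact Finset.sum_eq_zero fun α _ => by rw [h α t ht', zero_mul]
end

section
/- Reduction theorem (coordinate form): Let (φ,Φ) be a local morphism from the local Lie algebroid data (ρ,C) on ℝ^n with fiber ℝ^m to the local Lie algebroid data (ρ',C') on ℝ^{n'} with fiber ℝ^{m'}, and assume the morphism is fiberwise surjective, i.e. for every x ∈ ℝ^n the linear map ℝ^m → ℝ^{m'}, y ↦ Φ(x)y, is surjective. Let L' : ℝ^{n'} × ℝ^{m'} → ℝ be C² and L(x,y) := L'(φ(x), Φ(x)y). If an admissible C¹ curve (x,y) : [t₀,t₁] → ℝ^n × ℝ^m is a solution of Lagrange's equations for L, then the admissible curve (φ ∘ x, t ↦ Φ(x(t)) y(t)) is a solution of Lagrange's equations for L'. -/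
/-!
The Euler–Lagrange expressions of `L = L' ∘ (φ, Φ)` and of `L'` are related by
`EL_α(L) = ∑ δ, Φ^δ_α EL_δ(L')` along every admissible curve. By the chain rule
(`hasDerivAt_lagrangian_comp`) the momenta satisfy `∂L/∂y^α = ∑ β, Φ^β_α ∂L'/∂y^β`; differentiating
this in time produces `∂_i Φ^β_α ρ^i_ν y^ν ∂L'/∂y^β`, which combines with the `∂Φ` part of
`ρ^i_α ∂L/∂x^i` and with the `C` term into the left-hand side of the morphism condition, hence into
the `C'` term; the `∂φ` part becomes the `ρ'` term by admissibility. This bookkeeping is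
`euler_lagrange_algebra`. So the covector `EL(L')` is killed by the transpose of `Φ(x(t))`, which is
injective because `Φ(x(t))` is surjective.
-/

open Set

/-- The curve `(x,y)` is admissible on `[t₀,t₁]`: `(x^i)' = Σ_α ρ^i_α(x) y^α`. -/
def IsAdmissible {n m : ℕ} (A : LocalAlgebroidData n m) (t₀ t₁ : ℝ)
    (x : ℝ → Fin n → ℝ) (y : ℝ → Fin m → ℝ) : Prop :=
  ∀ t ∈ Icc t₀ t₁, ∀ i, deriv (fun s => x s i) t = ∑ α, A.ρ (x t) i α * y t α

/-- `(x,y)` is a solution of Lagrange's equations for `L` on `[t₀,t₁]`. -/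
def IsLagrangeSolution {n m : ℕ} (A : LocalAlgebroidData n m)
    (L : (Fin n → ℝ) × (Fin m → ℝ) → ℝ) (t₀ t₁ : ℝ)
    (x : ℝ → Fin n → ℝ) (y : ℝ → Fin m → ℝ) : Prop :=
  ∀ α, ∀ t ∈ Icc t₀ t₁,
    deriv (fun s => pLy L (x s) (y s) α) t
        + ∑ β, ∑ γ, A.C (x t) γ α β * y t β * pLy L (x t) (y t) γ
      = ∑ i, A.ρ (x t) i α * pLx L (x t) (y t) i

/-- A local morphism of local Lie algebroid data: a pair of smooth maps `(φ, Φ)`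
satisfying the admissibility and morphism conditions. -/
structure LocalMorphism {n m n' m' : ℕ}
    (A : LocalAlgebroidData n m) (A' : LocalAlgebroidData n' m') where
  φ : (Fin n → ℝ) → Fin n' → ℝ
  Φ : (Fin n → ℝ) → Fin m' → Fin m → ℝ
  smooth_φ : ContDiff ℝ (⊤ : ℕ∞) φ
  smooth_Φ : ContDiff ℝ (⊤ : ℕ∞) Φ
  adm : ∀ x (k : Fin n') (α : Fin m),
    ∑ i, pderiv' (fun z => φ z k) x i * A.ρ x i α
      = ∑ β, A'.ρ (φ x) k β * Φ x β α
  morph : ∀ x (α : Fin m') (μ ν : Fin m),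
    (∑ i, (A.ρ x i ν * pderiv' (fun z => Φ z α μ) x i
            - A.ρ x i μ * pderiv' (fun z => Φ z α ν) x i))
      + (∑ β, Φ x α β * A.C x β μ ν)
      - (∑ β, ∑ γ, A'.C (φ x) α β γ * Φ x β μ * Φ x γ ν) = 0

theorem fderiv_eq_sum_pderiv' {n : ℕ} {f : (Fin n → ℝ) → ℝ} {x : Fin n → ℝ}
    (hf : DifferentiableAt ℝ f x) (v : Fin n → ℝ) :
    fderiv ℝ f x v = ∑ j, v j * pderiv' f x j := by
  have key : ∀ j, pderiv' f x j = fderiv ℝ f x (Pi.single j 1) := by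
    intro j
    have h1 : HasFDerivAt f (fderiv ℝ f x) (Function.update x j (x j)) := by
      simpa using hf.hasFDerivAt
    exact (h1.comp_hasDerivAt (x j) (hasDerivAt_update x j (x j))).deriv
  conv_lhs => rw [pi_eq_sum_univ' v]
  simp [map_sum, key]

/-- Chain rule along a curve, in terms of coordinate partial derivatives. -/
theorem hasDerivAt_comp_pderiv' {n : ℕ} {f : (Fin n → ℝ) → ℝ} {u : ℝ → Fin n → ℝ}
    {u' : Fin n → ℝ} {s : ℝ} (hf : DifferentiableAt ℝ f (u s)) (hu : HasDerivAt u u' s) :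
    HasDerivAt (fun r => f (u r)) (∑ j, u' j * pderiv' f (u s) j) s := by
  rw [← fderiv_eq_sum_pderiv' hf]
  exact hf.hasFDerivAt.comp_hasDerivAt s hu

theorem hasDerivAt_pderiv' {n : ℕ} {f : (Fin n → ℝ) → ℝ} {x : Fin n → ℝ}
    (hf : DifferentiableAt ℝ f x) (i : Fin n) :
    HasDerivAt (fun s => f (Function.update x i s)) (pderiv' f x i) (x i) := by
  have h1 : DifferentiableAt ℝ f (Function.update x i (x i)) := by simpa using hf
  exact (h1.comp (x i) (hasDerivAt_update x i (x i)).differentiableAt).hasDerivAt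

/-- Chain rule for a Lagrangian along a curve `(u, v)` in `ℝ^n × ℝ^m`. -/
theorem hasDerivAt_lagrangian_comp {n m : ℕ} {G : (Fin n → ℝ) × (Fin m → ℝ) → ℝ}
    (hG : Differentiable ℝ G) {u : ℝ → Fin n → ℝ} {v : ℝ → Fin m → ℝ}
    {u' : Fin n → ℝ} {v' : Fin m → ℝ} {s : ℝ}
    (hu : HasDerivAt u u' s) (hv : HasDerivAt v v' s) :
    HasDerivAt (fun r => G (u r, v r))
      (∑ k, u' k * pLx G (u s) (v s) k + ∑ β, v' β * pLy G (u s) (v s) β) s := by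
  have hD := (hG (u s, v s)).hasFDerivAt
  have hx : HasFDerivAt (fun z => G (z, v s))
      ((fderiv ℝ G (u s, v s)).comp (ContinuousLinearMap.inl ℝ _ _)) (u s) :=
    hD.comp (u s) (hasFDerivAt_prodMk_left (u s) (v s))
  have hy : HasFDerivAt (fun w => G (u s, w))
      ((fderiv ℝ G (u s, v s)).comp (ContinuousLinearMap.inr ℝ _ _)) (v s) :=
    hD.comp (v s) (hasFDerivAt_prodMk_right (u s) (v s))
  have ex := fderiv_eq_sum_pderiv' hx.differentiableAt u'
  have ey := fderiv_eq_sum_pderiv' hy.differentiableAt v'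
  rw [hx.fderiv] at ex
  rw [hy.fderiv] at ey
  have h := hD.comp_hasDerivAt s (hu.prodMk hv)
  have e : ∑ k, u' k * pLx G (u s) (v s) k + ∑ β, v' β * pLy G (u s) (v s) β
      = fderiv ℝ G (u s, v s) (u', v') := by
    unfold pLx pLy
    rw [← ex, ← ey]
    simp [← map_add]
  rw [e]
  exact h

/-- The momenta of a `C²` Lagrangian are differentiable along differentiable curves. -/
theorem differentiableAt_pLy_comp {n m : ℕ} {G : (Fin n → ℝ) × (Fin m → ℝ) → ℝ}
    (hG : ContDiff ℝ 2 G) {u : ℝ → Fin n → ℝ} {v : ℝ → Fin m → ℝ} {s : ℝ}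
    (hu : DifferentiableAt ℝ u s) (hv : DifferentiableAt ℝ v s) (β : Fin m) :
    DifferentiableAt ℝ (fun r => pLy G (u r) (v r) β) s := by
  have hG1 : Differentiable ℝ G := hG.differentiable (by norm_num)
  have e : (fun r => pLy G (u r) (v r) β)
      = fun r => fderiv ℝ G (u r, v r) ((0 : Fin n → ℝ), Pi.single β (1 : ℝ)) := by
    funext r
    have hy : HasFDerivAt (fun w => G (u r, w))
        ((fderiv ℝ G (u r, v r)).comp (ContinuousLinearMap.inr ℝ _ _)) (v r) :=
      (hG1 (u r, v r)).hasFDerivAt.comp (v r) (hasFDerivAt_prodMk_right (u r) (v r))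
    have h := fderiv_eq_sum_pderiv' hy.differentiableAt (Pi.single β 1)
    rw [hy.fderiv] at h
    simpa [Pi.single_apply, pLy] using h.symm
  rw [e]
  have hd : Differentiable ℝ (fderiv ℝ G) :=
    (hG.fderiv_right (m := 1) (by norm_num)).differentiable (by norm_num)
  have hc : DifferentiableAt ℝ (fun r => fderiv ℝ G (u r, v r)) s :=
    (hd (u s, v s)).comp s (hu.prodMk hv)
  exact hc.clm_apply (differentiableAt_const _)

/-- Pointwise identity behind `EL_α(L) = ∑ δ, Φ^δ_α EL_δ(L')`. Here `p`, `p'`, `q` stand for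
`∂L'/∂y`, its time derivative, and `∂L'/∂x`; `dφ k i` and `dΦ β δ i` are the partial derivatives
of the morphism. The hypothesis `h` is Lagrange's equation for `L` with all chain rules expanded. -/
theorem euler_lagrange_algebra {n m n' m' : ℕ} (α : Fin m)
    (ρ : Fin n → Fin m → ℝ) (C : Fin m → Fin m → Fin m → ℝ)
    (ρ' : Fin n' → Fin m' → ℝ) (C' : Fin m' → Fin m' → Fin m' → ℝ)
    (Φ : Fin m' → Fin m → ℝ) (dφ : Fin n' → Fin n → ℝ) (dΦ : Fin m' → Fin m → Fin n → ℝ)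
    (y : Fin m → ℝ) (p p' : Fin m' → ℝ) (q : Fin n' → ℝ)
    (adm : ∀ k, ∑ i, dφ k i * ρ i α = ∑ β, ρ' k β * Φ β α)
    (morph : ∀ β ν, (∑ i, (ρ i ν * dΦ β α i - ρ i α * dΦ β ν i)) + (∑ γ, Φ β γ * C γ α ν)
      - (∑ δ, ∑ ε, C' β δ ε * Φ δ α * Φ ε ν) = 0)
    (h : ∑ β, ((∑ i, (∑ ν, ρ i ν * y ν) * dΦ β α i) * p β + Φ β α * p' β)
        + ∑ ν, ∑ γ, C γ α ν * y ν * (∑ β, Φ β γ * p β)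
      = ∑ i, ρ i α * (∑ k, dφ k i * q k + ∑ β, (∑ δ, dΦ β δ i * y δ) * p β)) :
    ∑ δ, Φ δ α * (p' δ + ∑ ε, ∑ β, C' β δ ε * (∑ ν, Φ ε ν * y ν) * p β
      - ∑ k, ρ' k δ * q k) = 0 := by
  have hm : ∑ β, ∑ ν, p β * y ν * ((∑ i, (ρ i ν * dΦ β α i - ρ i α * dΦ β ν i))
      + (∑ γ, Φ β γ * C γ α ν) - (∑ δ, ∑ ε, C' β δ ε * Φ δ α * Φ ε ν)) = 0 := by
    simp only [morph, mul_zero, Finset.sum_const_zero]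
  have ha : ∑ k, q k * ∑ i, dφ k i * ρ i α = ∑ k, q k * ∑ β, ρ' k β * Φ β α := by
    simp [adm]
  -- Each sum is brought to a fixed order of summation, so that they can be compared as atoms.
  have e1 : ∑ β, (∑ i, (∑ ν, ρ i ν * y ν) * dΦ β α i) * p β
      = ∑ β, ∑ ν, ∑ i, p β * y ν * (ρ i ν * dΦ β α i) := by
    refine Finset.sum_congr rfl fun β _ => ?_
    rw [Finset.sum_comm]
    simp only [Finset.sum_mul]
    exact Finset.sum_congr rfl fun i _ => Finset.sum_congr rfl fun ν _ => by ring
  have e2 : ∑ ν, ∑ γ, C γ α ν * y ν * (∑ β, Φ β γ * p β)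
      = ∑ β, ∑ ν, ∑ γ, p β * y ν * (Φ β γ * C γ α ν) := by
    rw [Finset.sum_comm (s := (Finset.univ : Finset (Fin m')))]
    refine Finset.sum_congr rfl fun ν _ => ?_
    rw [Finset.sum_comm]
    simp only [Finset.mul_sum]
    exact Finset.sum_congr rfl fun i _ => Finset.sum_congr rfl fun ν _ => by ring
  have e3 : ∑ i, ρ i α * ∑ k, dφ k i * q k = ∑ k, q k * ∑ i, dφ k i * ρ i α := by
    simp only [Finset.mul_sum]
    rw [Finset.sum_comm]
    exact Finset.sum_congr rfl fun i _ => Finset.sum_congr rfl fun ν _ => by ring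
  have e4 : ∑ i, ρ i α * ∑ β, (∑ δ, dΦ β δ i * y δ) * p β
      = ∑ β, ∑ ν, ∑ i, p β * y ν * (ρ i α * dΦ β ν i) := by
    simp only [Finset.mul_sum, Finset.sum_mul]
    rw [Finset.sum_comm]
    refine Finset.sum_congr rfl fun β _ => ?_
    rw [Finset.sum_comm]
    exact Finset.sum_congr rfl fun i _ => Finset.sum_congr rfl fun ν _ => by ring
  have e5 : ∑ δ, Φ δ α * ∑ ε, ∑ β, C' β δ ε * (∑ ν, Φ ε ν * y ν) * p β
      = ∑ β, ∑ ν, ∑ δ, ∑ ε, p β * y ν * (C' β δ ε * Φ δ α * Φ ε ν) := by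
    have r : ∀ β, ∑ ν, ∑ δ, ∑ ε, p β * y ν * (C' β δ ε * Φ δ α * Φ ε ν)
        = ∑ δ, ∑ ε, ∑ ν, p β * y ν * (C' β δ ε * Φ δ α * Φ ε ν) := fun β => by
      rw [Finset.sum_comm]
      exact Finset.sum_congr rfl fun δ _ => Finset.sum_comm
    simp only [r]
    rw [Finset.sum_comm]
    refine Finset.sum_congr rfl fun δ _ => ?_
    rw [Finset.sum_comm]
    simp only [Finset.mul_sum, Finset.sum_mul]
    exact Finset.sum_congr rfl fun ε _ => Finset.sum_congr rfl fun β _ =>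
      Finset.sum_congr rfl fun ν _ => by ring
  have e6 : ∑ δ, Φ δ α * ∑ k, ρ' k δ * q k = ∑ k, q k * ∑ β, ρ' k β * Φ β α := by
    simp only [Finset.mul_sum]
    rw [Finset.sum_comm]
    exact Finset.sum_congr rfl fun i _ => Finset.sum_congr rfl fun ν _ => by ring
  simp only [mul_add, mul_sub, Finset.sum_add_distrib, Finset.sum_sub_distrib] at h hm ⊢
  simp only [Finset.mul_sum] at hm
  rw [e1, e2, e3, e4] at h
  rw [e5, e6]
  linarith

/-- **Reduction theorem (coordinate form).**  Let `(φ,Φ)` be a fiberwise surjective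
local morphism of Lie algebroid data and `L = L' ∘ (φ,Φ)`.  If an admissible C¹ curve
`(x,y)` solves Lagrange's equations for `L`, then the image curve `(φ∘x, Φ(x)y)`
solves Lagrange's equations for `L'`. -/
theorem reduction_of_lagrange_equations
    {n m n' m' : ℕ} {A : LocalAlgebroidData n m} {A' : LocalAlgebroidData n' m'}
    (F : LocalMorphism A A')
    (hsurj : ∀ x : Fin n → ℝ,
      Function.Surjective (fun (y : Fin m → ℝ) (β : Fin m') => ∑ α, F.Φ x β α * y α))
    (L' : (Fin n' → ℝ) × (Fin m' → ℝ) → ℝ) (hL' : ContDiff ℝ 2 L')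
    (t₀ t₁ : ℝ) (ht : t₀ < t₁)
    (x : ℝ → Fin n → ℝ) (y : ℝ → Fin m → ℝ)
    (hx : ContDiff ℝ 1 x) (hy : ContDiff ℝ 1 y)
    (hadm : IsAdmissible A t₀ t₁ x y)
    (hsol : IsLagrangeSolution A
      (fun p => L' (F.φ p.1, fun β => ∑ δ, F.Φ p.1 β δ * p.2 δ)) t₀ t₁ x y) :
    IsLagrangeSolution A' L' t₀ t₁ (fun t => F.φ (x t))
      (fun t β => ∑ α, F.Φ (x t) β α * y t α) := by
  have hL1 : Differentiable ℝ L' := hL'.differentiable (by norm_num)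
  have hφd : Differentiable ℝ F.φ := F.smooth_φ.differentiable (by simp)
  have hΦd : Differentiable ℝ F.Φ := F.smooth_Φ.differentiable (by simp)
  have hφk : ∀ k, Differentiable ℝ (fun z => F.φ z k) := fun k =>
    differentiable_pi.1 hφd k
  have hΦk : ∀ β δ, Differentiable ℝ (fun z => F.Φ z β δ) := fun β δ =>
    differentiable_pi.1 (differentiable_pi.1 hΦd β) δ
  have hxd : Differentiable ℝ x := hx.differentiable (by norm_num)
  have hyd : Differentiable ℝ y := hy.differentiable (by norm_num)
  set L : (Fin n → ℝ) × (Fin m → ℝ) → ℝ :=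
    fun p => L' (F.φ p.1, fun β => ∑ δ, F.Φ p.1 β δ * p.2 δ) with hL
  have hLy : ∀ a b α, pLy L a b α
      = ∑ β, F.Φ a β α * pLy L' (F.φ a) (fun β => ∑ δ, F.Φ a β δ * b δ) β := by
    intro a b α
    have hv : HasDerivAt
        (fun s (β : Fin m') => ∑ δ, F.Φ a β δ * Function.update b α s δ)
        (fun β => F.Φ a β α) (b α) := by
      rw [hasDerivAt_pi]
      intro β
      have h := HasDerivAt.fun_sum (u := Finset.univ) (fun δ _ =>
        (hasDerivAt_pi.1 (hasDerivAt_update b α (b α)) δ).const_mul (F.Φ a β δ))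
      simpa [Pi.single_apply] using h
    have h := (hasDerivAt_lagrangian_comp hL1 (hasDerivAt_const (b α) (F.φ a)) hv).deriv
    simpa [pLy, pderiv', hL] using h
  have hLx : ∀ a b i, pLx L a b i
      = ∑ k, pderiv' (fun z => F.φ z k) a i
            * pLx L' (F.φ a) (fun β => ∑ δ, F.Φ a β δ * b δ) k
        + ∑ β, (∑ δ, pderiv' (fun z => F.Φ z β δ) a i * b δ)
            * pLy L' (F.φ a) (fun β => ∑ δ, F.Φ a β δ * b δ) β := by
    intro a b i
    have hu : HasDerivAt (fun s => F.φ (Function.update a i s))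
        (fun k => pderiv' (fun z => F.φ z k) a i) (a i) :=
      hasDerivAt_pi.2 fun k => hasDerivAt_pderiv' (hφk k a) i
    have hv : HasDerivAt
        (fun s (β : Fin m') => ∑ δ, F.Φ (Function.update a i s) β δ * b δ)
        (fun β => ∑ δ, pderiv' (fun z => F.Φ z β δ) a i * b δ) (a i) :=
      hasDerivAt_pi.2 fun β => HasDerivAt.fun_sum fun δ _ =>
        (hasDerivAt_pderiv' (hΦk β δ a) i).mul_const (b δ)
    have h := (hasDerivAt_lagrangian_comp hL1 hu hv).deriv
    simp only [Function.update_eq_self] at h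
    exact h
  intro β₀ t htI
  have hud : DifferentiableAt ℝ (fun t => F.φ (x t)) t := (hφd (x t)).comp t (hxd t)
  have hΦx : ∀ β δ, HasDerivAt (fun s => F.Φ (x s) β δ)
      (∑ i, (∑ ν, A.ρ (x t) i ν * y t ν) * pderiv' (fun z => F.Φ z β δ) (x t) i) t := by
    intro β δ
    have h := hasDerivAt_comp_pderiv' (hΦk β δ (x t)) (hxd t).hasDerivAt
    have e : ∀ i, deriv x t i = ∑ ν, A.ρ (x t) i ν * y t ν := fun i => by
      rw [← hadm t htI i]
      exact ((hasDerivAt_pi.1 (hxd t).hasDerivAt) i).deriv.symm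
    simpa only [e] using h
  have hvd : DifferentiableAt ℝ (fun t (β : Fin m') => ∑ α, F.Φ (x t) β α * y t α) t :=
    differentiableAt_pi.2 fun β => DifferentiableAt.fun_sum fun δ _ =>
      (hΦx β δ).differentiableAt.mul (differentiableAt_pi.1 (hyd t) δ)
  have hp := fun β => (differentiableAt_pLy_comp hL' hud hvd β).hasDerivAt
  have key : ∀ α, _ := fun α => euler_lagrange_algebra α (A.ρ (x t)) (A.C (x t))
    (A'.ρ (F.φ (x t))) (A'.C (F.φ (x t))) (F.Φ (x t))
    (fun k i => pderiv' (fun z => F.φ z k) (x t) i)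
    (fun β δ i => pderiv' (fun z => F.Φ z β δ) (x t) i) (y t)
    (fun β => pLy L' (F.φ (x t)) (fun β => ∑ δ, F.Φ (x t) β δ * y t δ) β)
    (fun β => deriv (fun s =>
      pLy L' (F.φ (x s)) (fun β => ∑ δ, F.Φ (x s) β δ * y s δ) β) t)
    (fun k => pLx L' (F.φ (x t)) (fun β => ∑ δ, F.Φ (x t) β δ * y t δ) k)
    (fun k => F.adm (x t) k α) (fun β ν => F.morph (x t) β α ν) (by
      have h := hsol α t htI
      simp only [hLy, hLx] at h
      rw [(HasDerivAt.fun_sum fun β _ => (hΦx β α).fun_mul (hp β)).deriv] at h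
      exact h)
  -- A vector `w` with `Φ(x(t)) w = e_{β₀}` extracts the `β₀` component.
  obtain ⟨w, hw⟩ := hsurj (x t) (Pi.single β₀ 1)
  rw [← sub_eq_zero]
  have hz : ∀ E : Fin m' → ℝ, (∀ α, ∑ δ, F.Φ (x t) δ α * E δ = 0) → E β₀ = 0 := by
    intro E hE
    have h0 : ∑ α, w α * ∑ δ, F.Φ (x t) δ α * E δ = 0 := by simp [hE]
    have h1 : ∑ α, w α * ∑ δ, F.Φ (x t) δ α * E δ
        = ∑ δ, (∑ α, F.Φ (x t) δ α * w α) * E δ := by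
      simp only [Finset.mul_sum, Finset.sum_mul]
      rw [Finset.sum_comm]
      exact Finset.sum_congr rfl fun δ _ => Finset.sum_congr rfl fun α _ => by ring
    have h2 : ∀ δ, ∑ α, F.Φ (x t) δ α * w α = (Pi.single β₀ 1 : Fin m' → ℝ) δ :=
      fun δ => congrFun hw δ
    rw [h1] at h0
    simpa [h2, Pi.single_apply] using h0
  exact hz _ key
end

section
/- Morphisms map admissible variations to admissible variations (coordinate form): Let (φ,Φ) be a local morphism from the local Lie algebroid data (ρ,C) on ℝ^n with fiber ℝ^m to the local Lie algebroid data (ρ',C') on ℝ^{n'} with fiber ℝ^{m'}. Let (x,a) : [t₀,t₁] → ℝ^n × ℝ^m be an admissible C¹ curve and σ : [t₀,t₁] → ℝ^m a C¹ map. Then for every α and every t ∈ [t₀,t₁]: Σ_{i,β,ν} ∂Φ^α_β/∂x^i(x(t)) ρ^i_ν(x(t)) σ^ν(t) a^β(t) + Σ_β Φ^α_β(x(t)) ( (σ^β)'(t) + Σ_{μ,ν} C^β_{μν}(x(t)) a^μ(t) σ^ν(t) ) = d/dt[ Σ_β Φ^α_β(x(t)) σ^β(t) ] + Σ_{β,γ}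 C'^α_{βγ}(φ(x(t))) (Φ(x(t))a(t))^β (Φ(x(t))σ(t))^γ. (That is, the tangent map of Φ sends the admissible variation Ξ_{(x,a)}(σ), with components (Σ_α ρ^i_α σ^α ; (σ^α)' + Σ_{β,γ} C^α_{βγ} a^β σ^γ), to the admissible variation Ξ of the image curve along the image section.) -/
/-!
Along an admissible curve the chain rule gives
`d/dt Φ^α_β(x(t)) = Σ_{i,μ} ∂_iΦ^α_β ρ^i_μ a^μ` (`hasDerivAt_comp_curve`), so by the product rule
the terms `Φ^α_β (σ^β)'` occur on both sides of the claim and cancel. What remains is an algebraic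
identity at the point `x(t)`: the morphism condition contracted with `a^μ σ^ν`
(`LocalMorphism.morph_contract`).
-/

open Set

/-- For a differentiable function the coordinate partial derivative is the Fréchet derivative
evaluated on the corresponding basis vector. -/
lemma pderiv'_eq_fderiv {n : ℕ} {f : (Fin n → ℝ) → ℝ} {x : Fin n → ℝ}
    (hf : DifferentiableAt ℝ f x) (j : Fin n) :
    pderiv' f x j = fderiv ℝ f x (Pi.single j 1) := by
  have h2 : HasFDerivAt f (fderiv ℝ f x) (Function.update x j (x j)) := by
    rw [Function.update_eq_self]; exact hf.hasFDerivAt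
  exact (h2.comp_hasDerivAt (x j) (hasDerivAt_update x j (x j))).deriv

lemma hasDerivAt_comp_curve {n : ℕ} {f : (Fin n → ℝ) → ℝ} {x : ℝ → Fin n → ℝ} {t : ℝ}
    (hf : DifferentiableAt ℝ f (x t)) (hx : DifferentiableAt ℝ x t) :
    HasDerivAt (fun s => f (x s))
      (∑ i, pderiv' f (x t) i * deriv (fun s => x s i) t) t := by
  have h := hf.hasFDerivAt.comp_hasDerivAt t hx.hasDerivAt
  have hd : ∀ i, deriv (fun s => x s i) t = deriv x t i := fun i =>
    ((hasDerivAt_pi.1 hx.hasDerivAt) i).deriv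
  have he : fderiv ℝ f (x t) (deriv x t)
      = ∑ i, pderiv' f (x t) i * deriv (fun s => x s i) t := by
    conv_lhs => rw [← Finset.univ_sum_single (deriv x t), map_sum]
    refine Finset.sum_congr rfl fun i _ => ?_
    have hs : (Pi.single i (deriv x t i) : Fin n → ℝ)
        = deriv x t i • (Pi.single i 1 : Fin n → ℝ) := by
      rw [← Pi.single_smul, smul_eq_mul, mul_one]
    rw [hs, map_smul, pderiv'_eq_fderiv hf, hd, smul_eq_mul, mul_comm]
  rw [← he]
  exact h

/-- The morphism condition contracted with two vectors `u`, `v` of the fiber. -/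
lemma LocalMorphism.morph_contract {n m n' m' : ℕ}
    {A : LocalAlgebroidData n m} {A' : LocalAlgebroidData n' m'} (F : LocalMorphism A A')
    (x : Fin n → ℝ) (α : Fin m') (u v : Fin m → ℝ) :
    (∑ i, ∑ μ, ∑ ν, pderiv' (fun z => F.Φ z α μ) x i * A.ρ x i ν * v ν * u μ)
        + ∑ β, F.Φ x α β * ∑ μ, ∑ ν, A.C x β μ ν * u μ * v ν
      = (∑ ν, (∑ i, pderiv' (fun z => F.Φ z α ν) x i * ∑ μ, A.ρ x i μ * u μ) * v ν)
        + ∑ β, ∑ γ, A'.C (F.φ x) α β γ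
            * (∑ μ, F.Φ x β μ * u μ) * (∑ ν, F.Φ x γ ν * v ν) := by
  have h : ∑ μ, ∑ ν, ((∑ i, (A.ρ x i ν * pderiv' (fun z => F.Φ z α μ) x i
            - A.ρ x i μ * pderiv' (fun z => F.Φ z α ν) x i))
      + (∑ β, F.Φ x α β * A.C x β μ ν)
      - (∑ β, ∑ γ, A'.C (F.φ x) α β γ * F.Φ x β μ * F.Φ x γ ν)) * (u μ * v ν) = 0 :=
    Finset.sum_eq_zero fun μ _ => Finset.sum_eq_zero fun ν _ => by rw [F.morph, zero_mul]
  have e1 : (∑ i, ∑ μ, ∑ ν, pderiv' (fun z => F.Φ z α μ) x i * A.ρ x i ν * v ν * u μ)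
      = ∑ μ, ∑ ν, (∑ i, A.ρ x i ν * pderiv' (fun z => F.Φ z α μ) x i) * (u μ * v ν) := by
    rw [Finset.sum_comm]
    refine Finset.sum_congr rfl fun μ _ => ?_
    rw [Finset.sum_comm]
    refine Finset.sum_congr rfl fun ν _ => ?_
    rw [Finset.sum_mul]
    exact Finset.sum_congr rfl fun i _ => by ring
  have e2 : (∑ β, F.Φ x α β * ∑ μ, ∑ ν, A.C x β μ ν * u μ * v ν)
      = ∑ μ, ∑ ν, (∑ β, F.Φ x α β * A.C x β μ ν) * (u μ * v ν) := by
    simp only [Finset.mul_sum]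
    rw [Finset.sum_comm]
    refine Finset.sum_congr rfl fun μ _ => ?_
    rw [Finset.sum_comm]
    refine Finset.sum_congr rfl fun ν _ => ?_
    rw [Finset.sum_mul]
    exact Finset.sum_congr rfl fun i _ => by ring
  have e3 : (∑ ν, (∑ i, pderiv' (fun z => F.Φ z α ν) x i * ∑ μ, A.ρ x i μ * u μ) * v ν)
      = ∑ μ, ∑ ν, (∑ i, A.ρ x i μ * pderiv' (fun z => F.Φ z α ν) x i) * (u μ * v ν) := by
    rw [Finset.sum_comm (f := fun μ ν =>
      (∑ i, A.ρ x i μ * pderiv' (fun z => F.Φ z α ν) x i) * (u μ * v ν))]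
    refine Finset.sum_congr rfl fun ν _ => ?_
    simp only [Finset.mul_sum, Finset.sum_mul]
    rw [Finset.sum_comm]
    exact Finset.sum_congr rfl fun μ _ => Finset.sum_congr rfl fun i _ => by ring
  have e4 : (∑ β, ∑ γ, A'.C (F.φ x) α β γ
            * (∑ μ, F.Φ x β μ * u μ) * (∑ ν, F.Φ x γ ν * v ν))
      = ∑ μ, ∑ ν, (∑ β, ∑ γ, A'.C (F.φ x) α β γ * F.Φ x β μ * F.Φ x γ ν)
          * (u μ * v ν) := by
    have e : ∀ β γ, A'.C (F.φ x) α β γ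
            * (∑ μ, F.Φ x β μ * u μ) * (∑ ν, F.Φ x γ ν * v ν)
        = ∑ μ, ∑ ν, A'.C (F.φ x) α β γ * F.Φ x β μ * F.Φ x γ ν * (u μ * v ν) := by
      intro β γ
      rw [mul_assoc, Finset.sum_mul_sum, Finset.mul_sum]
      refine Finset.sum_congr rfl fun μ _ => ?_
      rw [Finset.mul_sum]
      exact Finset.sum_congr rfl fun ν _ => by ring
    simp only [e, Finset.sum_mul]
    -- Both sides are sums over `(β, γ, μ, ν)`: pull `μ` and `ν` to the outside.
    calc _ = ∑ β, ∑ μ, ∑ γ, ∑ ν, A'.C (F.φ x) α β γ * F.Φ x β μ * F.Φ x γ ν * (u μ * v ν) :=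
          Finset.sum_congr rfl fun β _ => Finset.sum_comm
      _ = ∑ μ, ∑ β, ∑ ν, ∑ γ, A'.C (F.φ x) α β γ * F.Φ x β μ * F.Φ x γ ν * (u μ * v ν) := by
          rw [Finset.sum_comm]
          exact Finset.sum_congr rfl fun μ _ => Finset.sum_congr rfl fun β _ =>
            Finset.sum_comm
      _ = _ := Finset.sum_congr rfl fun μ _ => Finset.sum_comm
  simp only [sub_mul, add_mul, Finset.sum_sub_distrib, Finset.sum_add_distrib] at h
  rw [e1, e2, e3, e4]
  linarith

/-- **Morphisms map admissible variations to admissible variations (coordinate form).**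
For a local morphism `(φ,Φ)`, an admissible C¹ curve `(x,a)` and a C¹ map `σ`, the
tangent map of `Φ` sends the admissible variation `Ξ_{(x,a)}(σ)` to the admissible
variation of the image curve along the image section. -/
theorem morphism_maps_variations_to_variations
    {n m n' m' : ℕ} {A : LocalAlgebroidData n m} {A' : LocalAlgebroidData n' m'}
    (F : LocalMorphism A A')
    (t₀ t₁ : ℝ) (ht : t₀ < t₁)
    (x : ℝ → Fin n → ℝ) (a : ℝ → Fin m → ℝ)
    (hx : ContDiff ℝ 1 x) (ha : ContDiff ℝ 1 a)
    (hadm : IsAdmissible A t₀ t₁ x a)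
    (σ : ℝ → Fin m → ℝ) (hσ : ContDiff ℝ 1 σ) :
    ∀ (α : Fin m'), ∀ t ∈ Icc t₀ t₁,
      (∑ i, ∑ β, ∑ ν,
          pderiv' (fun z => F.Φ z α β) (x t) i * A.ρ (x t) i ν * σ t ν * a t β)
        + ∑ β, F.Φ (x t) α β *
            (deriv (fun s => σ s β) t
              + ∑ μ, ∑ ν, A.C (x t) β μ ν * a t μ * σ t ν)
      = deriv (fun s => ∑ β, F.Φ (x s) α β * σ s β) t
        + ∑ β, ∑ γ, A'.C (F.φ (x t)) α β γ
            * (∑ δ, F.Φ (x t) β δ * a t δ) * (∑ δ, F.Φ (x t) γ δ * σ t δ) := by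
  intro α t htI
  have hxd : DifferentiableAt ℝ x t := (hx.differentiable one_ne_zero) t
  have hσd : DifferentiableAt ℝ σ t := (hσ.differentiable one_ne_zero) t
  have hΦ : ∀ β, DifferentiableAt ℝ (fun z => F.Φ z α β) (x t) := fun β =>
    differentiableAt_pi.1 (differentiableAt_pi.1
      ((F.smooth_Φ.differentiable (by simp)) (x t)) α) β
  have hd : deriv (fun s => ∑ β, F.Φ (x s) α β * σ s β) t
      = ∑ β, ((∑ i, pderiv' (fun z => F.Φ z α β) (x t) i
            * ∑ μ, A.ρ (x t) i μ * a t μ) * σ t β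
          + F.Φ (x t) α β * deriv (fun s => σ s β) t) := by
    refine (HasDerivAt.fun_sum fun β _ => ?_).deriv
    have h := hasDerivAt_comp_curve (hΦ β) hxd
    simp only [hadm t htI] at h
    exact h.mul (differentiableAt_pi.1 hσd β).hasDerivAt
  rw [hd]
  simp only [mul_add, Finset.sum_add_distrib]
  linarith [F.morph_contract (x t) α (a t) (σ t)]
end

section
/- Gauge invariance under total derivatives (coordinate form): Let (ρ,C) be local Lie algebroid data on ℝ^n with fiber ℝ^m satisfying the first structure equation, and let f : ℝ^n → ℝ be smooth. Define ΔL : ℝ^n × ℝ^m → ℝ by ΔL(x,y) := Σ_{i,α} ∂f/∂x^i(x) ρ^i_α(x) y^α (the 'total time derivative' of f along admissible curves). Then for every admissible C¹ curve (x,y) : [t₀,t₁] → ℝ^n × ℝ^m, the Euler–Lagrange expression of ΔL vanishes identically: d/dt[∂ΔL/∂y^α(x(t),y(t))] + Σ_{β,γ} C^γ_{αβ}(x(t)) y^β(t) ∂ΔL/∂y^γ(x(t),y(t)) = Σ_i ρ^i_α(x(t)) ∂ΔL/∂x^i(x(t),y(t)) for all α and all t ∈ [t₀,t₁]. Consequently,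 for any C² Lagrangian L, the curves solving Lagrange's equations for L and for L + ΔL coincide. -/
/-!
Write `g_α = Σ_i ∂_i f · ρ^i_α`, so that `ΔL(x,y) = Σ_α g_α(x) y^α` is linear in `y`. Then
`∂ΔL/∂y^α = g_α` and `∂ΔL/∂x^i = Σ_β ∂_i g_β y^β` (`pLy_linear`, `pLx_linear`), and along an
admissible curve `d/dt g_α(x) = Σ_{j,β} ∂_j g_α ρ^j_β y^β` by the chain rule (`deriv_comp_curve`).
The Euler–Lagrange expression of `ΔL` is therefore `Σ_β y^β` times
`Σ_j ρ^j_β ∂_j g_α - Σ_j ρ^j_α ∂_j g_β + Σ_γ C^γ_{αβ} g_γ`. Here the second derivatives of `f`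
cancel by symmetry, and what remains is `Σ_i ∂_i f` times the first structure equation
(`bracket_identity`). This is the statement that the exact one-form `df`, pulled back by the anchor,
is closed.

The equivalence for `L` and `L + ΔL` follows because every term of Lagrange's equations is
additive in the Lagrangian; for the time derivative this needs that `∂L/∂y^α` is differentiable
along the curve, which holds as `L` is `C²` and the curve is `C¹`.
-/

open Set

/-- The first structure equation of local Lie algebroid data. -/
def FirstStructureEq {n m : ℕ} (A : LocalAlgebroidData n m) : Prop :=
  ∀ (x : Fin n → ℝ) (i : Fin n) (α β : Fin m),
    ∑ j, (A.ρ x j α * pderiv' (fun z => A.ρ z i β) x j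
           - A.ρ x j β * pderiv' (fun z => A.ρ z i α) x j)
      = ∑ γ, A.ρ x i γ * A.C x γ α β

lemma contDiff_pderiv' {n : ℕ} {f : (Fin n → ℝ) → ℝ} (hf : ContDiff ℝ (⊤ : ℕ∞) f) (j : Fin n) :
    ContDiff ℝ (⊤ : ℕ∞) (fun x => pderiv' f x j) := by
  have : (fun x => pderiv' f x j) = fun x => fderiv ℝ f x (Pi.single j 1) :=
    funext fun x => pderiv'_eq_fderiv (hf.differentiable (by simp) x) j
  rw [this]
  exact (hf.fderiv_right (m := (⊤ : ℕ∞)) (by simp)).clm_apply contDiff_const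

lemma two_le_smooth : (2 : WithTop ℕ∞) ≤ ((⊤ : ℕ∞) : WithTop ℕ∞) :=
  WithTop.coe_le_coe.2 (le_top : (2 : ℕ∞) ≤ ⊤)

lemma pderiv'_comm {n : ℕ} {f : (Fin n → ℝ) → ℝ} (hf : ContDiff ℝ (⊤ : ℕ∞) f)
    (x : Fin n → ℝ) (i j : Fin n) :
    pderiv' (fun z => pderiv' f z i) x j = pderiv' (fun z => pderiv' f z j) x i := by
  have hd : DifferentiableAt ℝ (fderiv ℝ f) x :=
    (hf.fderiv_right (m := (⊤ : ℕ∞)) (by simp)).differentiable (by simp) x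
  have key : ∀ k l : Fin n, pderiv' (fun z => pderiv' f z k) x l
      = fderiv ℝ (fderiv ℝ f) x (Pi.single l 1) (Pi.single k 1) := by
    intro k l
    rw [pderiv'_eq_fderiv ((contDiff_pderiv' hf k).differentiable (by simp) x)]
    have : (fun x => pderiv' f x k) = fun x => fderiv ℝ f x (Pi.single k 1) :=
      funext fun x => pderiv'_eq_fderiv (hf.differentiable (by simp) x) k
    rw [this, fderiv_clm_apply hd (differentiableAt_const _)]
    simp
  rw [key, key]
  have hs : IsSymmSndFDerivAt ℝ f x :=
    hf.contDiffAt.isSymmSndFDerivAt (by simpa using two_le_smooth)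
  exact hs _ _

lemma deriv_comp_curve {n : ℕ} {g : (Fin n → ℝ) → ℝ} {x : ℝ → Fin n → ℝ} {t : ℝ}
    (hg : DifferentiableAt ℝ g (x t)) (hx : DifferentiableAt ℝ x t) :
    deriv (fun s => g (x s)) t = ∑ j, pderiv' g (x t) j * deriv (fun s => x s j) t := by
  have h := (hg.hasFDerivAt.comp_hasDerivAt t hx.hasDerivAt).deriv
  have h' : deriv (fun s => g (x s)) t = fderiv ℝ g (x t) (deriv x t) := h
  rw [h', pi_eq_sum_univ' (deriv x t), map_sum]
  refine Finset.sum_congr rfl fun j _ => ?_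
  have hj : deriv (fun s => x s j) t = deriv x t j :=
    (hasDerivAt_pi.1 hx.hasDerivAt j).deriv
  rw [map_smul, pderiv'_eq_fderiv hg, hj, smul_eq_mul, mul_comm]

lemma pderiv'_sum {n : ℕ} {ι : Type*} [Fintype ι] {F : ι → (Fin n → ℝ) → ℝ} {x : Fin n → ℝ}
    (hF : ∀ k, DifferentiableAt ℝ (F k) x) (j : Fin n) :
    pderiv' (fun z => ∑ k, F k z) x j = ∑ k, pderiv' (F k) x j := by
  rw [pderiv'_eq_fderiv (DifferentiableAt.fun_sum fun k _ => hF k),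
    fderiv_fun_sum fun k _ => hF k]
  simp [pderiv'_eq_fderiv (hF _)]

lemma pderiv'_mul {n : ℕ} {f g : (Fin n → ℝ) → ℝ} {x : Fin n → ℝ}
    (hf : DifferentiableAt ℝ f x) (hg : DifferentiableAt ℝ g x) (j : Fin n) :
    pderiv' (fun z => f z * g z) x j = pderiv' f x j * g x + f x * pderiv' g x j := by
  rw [pderiv'_eq_fderiv (hf.fun_mul hg), fderiv_fun_mul hf hg, pderiv'_eq_fderiv hf,
    pderiv'_eq_fderiv hg]
  simp
  ring

lemma pderiv'_add {n : ℕ} {f g : (Fin n → ℝ) → ℝ} {x : Fin n → ℝ}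
    (hf : DifferentiableAt ℝ f x) (hg : DifferentiableAt ℝ g x) (j : Fin n) :
    pderiv' (fun z => f z + g z) x j = pderiv' f x j + pderiv' g x j := by
  rw [pderiv'_eq_fderiv (hf.fun_add hg), fderiv_fun_add hf hg, pderiv'_eq_fderiv hf,
    pderiv'_eq_fderiv hg]
  simp

/-- The coefficients `g_α = Σ_i ∂_i f · ρ^i_α` of the one-form `ρ^* df` on the algebroid. -/
noncomputable def anchorDiff {n m : ℕ} (A : LocalAlgebroidData n m) (f : (Fin n → ℝ) → ℝ)
    (α : Fin m) (x : Fin n → ℝ) : ℝ :=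
  ∑ i, pderiv' f x i * A.ρ x i α

lemma contDiff_rho {n m : ℕ} (A : LocalAlgebroidData n m) (i : Fin n) (α : Fin m) :
    ContDiff ℝ (⊤ : ℕ∞) (fun x => A.ρ x i α) :=
  contDiff_pi.1 (contDiff_pi.1 A.smooth_ρ i) α

lemma contDiff_anchorDiff {n m : ℕ} (A : LocalAlgebroidData n m) {f : (Fin n → ℝ) → ℝ}
    (hf : ContDiff ℝ (⊤ : ℕ∞) f) (α : Fin m) : ContDiff ℝ (⊤ : ℕ∞) (anchorDiff A f α) :=
  ContDiff.sum fun i _ => (contDiff_pderiv' hf i).mul (contDiff_rho A i α)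

lemma totalDeriv_eq {n m : ℕ} (A : LocalAlgebroidData n m) (f : (Fin n → ℝ) → ℝ)
    (p : (Fin n → ℝ) × (Fin m → ℝ)) :
    ∑ i, ∑ α, pderiv' f p.1 i * A.ρ p.1 i α * p.2 α = ∑ α, anchorDiff A f α p.1 * p.2 α := by
  rw [Finset.sum_comm]
  simp only [anchorDiff, Finset.sum_mul]

lemma pLy_linear {n m : ℕ} (g : Fin m → (Fin n → ℝ) → ℝ) (x : Fin n → ℝ) (y : Fin m → ℝ)
    (α : Fin m) : pLy (fun p => ∑ β, g β p.1 * p.2 β) x y α = g α x := by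
  unfold pLy
  dsimp only
  rw [pderiv'_eq_fderiv (by fun_prop)]
  have h : (fun w : Fin m → ℝ => ∑ β, g β x * w β)
      = ⇑(∑ β, g β x • (ContinuousLinearMap.proj β : (Fin m → ℝ) →L[ℝ] ℝ)) := by
    ext w
    simp
  simp only [h, ContinuousLinearMap.fderiv]
  simp [Pi.single_apply]

lemma pLx_linear {n m : ℕ} {g : Fin m → (Fin n → ℝ) → ℝ} (hg : ∀ β, Differentiable ℝ (g β))
    (x : Fin n → ℝ) (y : Fin m → ℝ) (i : Fin n) :
    pLx (fun p => ∑ β, g β p.1 * p.2 β) x y i = ∑ β, pderiv' (g β) x i * y β := by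
  unfold pLx
  rw [pderiv'_sum (F := fun β z => g β z * y β) fun β => (hg β x).mul_const _]
  refine Finset.sum_congr rfl fun β _ => ?_
  rw [pderiv'_mul (hg β x) (differentiableAt_const _)]
  simp [pderiv']

/-- Closedness of the one-form `ρ^* df`: the second derivatives of `f` cancel by symmetry, the rest
is the first structure equation contracted with `∂_i f`. -/
lemma bracket_identity {n m : ℕ} (A : LocalAlgebroidData n m) (hA : FirstStructureEq A)
    {f : (Fin n → ℝ) → ℝ} (hf : ContDiff ℝ (⊤ : ℕ∞) f) (x : Fin n → ℝ) (α β : Fin m) :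
    ∑ j, A.ρ x j β * pderiv' (anchorDiff A f α) x j + ∑ γ, A.C x γ α β * anchorDiff A f γ x
      = ∑ j, A.ρ x j α * pderiv' (anchorDiff A f β) x j := by
  have hp : ∀ δ j, pderiv' (anchorDiff A f δ) x j
      = ∑ i, (pderiv' (fun z => pderiv' f z i) x j * A.ρ x i δ
          + pderiv' f x i * pderiv' (fun z => A.ρ z i δ) x j) := by
    intro δ j
    have hF : ∀ i, DifferentiableAt ℝ (fun z => pderiv' f z i) x := fun i =>
      (contDiff_pderiv' hf i).differentiable (by simp) x
    have hR : ∀ i, DifferentiableAt ℝ (fun z => A.ρ z i δ) x := fun i =>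
      (contDiff_rho A i δ).differentiable (by simp) x
    unfold anchorDiff
    rw [pderiv'_sum (F := fun i z => pderiv' f z i * A.ρ z i δ) fun i => (hF i).fun_mul (hR i)]
    exact Finset.sum_congr rfl fun i _ => pderiv'_mul (hF i) (hR i) j
  have hC : ∑ γ, A.C x γ α β * anchorDiff A f γ x
      = ∑ i, pderiv' f x i * ∑ j, (A.ρ x j α * pderiv' (fun z => A.ρ z i β) x j
           - A.ρ x j β * pderiv' (fun z => A.ρ z i α) x j) := by
    simp only [hA x _ α β, anchorDiff, Finset.mul_sum]
    rw [Finset.sum_comm]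
    exact Finset.sum_congr rfl fun i _ => Finset.sum_congr rfl fun γ _ => by ring
  have hS : ∑ j, ∑ i, A.ρ x j β * (pderiv' (fun z => pderiv' f z i) x j * A.ρ x i α)
      = ∑ j, ∑ i, A.ρ x j α * (pderiv' (fun z => pderiv' f z i) x j * A.ρ x i β) := by
    rw [Finset.sum_comm]
    refine Finset.sum_congr rfl fun i _ => Finset.sum_congr rfl fun j _ => ?_
    rw [pderiv'_comm hf x i j]
    ring
  rw [hC]
  simp only [hp, Finset.mul_sum, mul_add, mul_sub, Finset.sum_add_distrib, Finset.sum_sub_distrib]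
  rw [hS, Finset.sum_comm (f := fun i j => pderiv' f x i *
      (A.ρ x j α * pderiv' (fun z => A.ρ z i β) x j)),
    Finset.sum_comm (f := fun i j => pderiv' f x i *
      (A.ρ x j β * pderiv' (fun z => A.ρ z i α) x j))]
  simp only [mul_left_comm (pderiv' f x _)]
  ring

lemma totalDeriv_isLagrangeSolution {n m : ℕ} (A : LocalAlgebroidData n m)
    (hA : FirstStructureEq A) {f : (Fin n → ℝ) → ℝ} (hf : ContDiff ℝ (⊤ : ℕ∞) f) {t₀ t₁ : ℝ}
    {x : ℝ → Fin n → ℝ} {y : ℝ → Fin m → ℝ} (hx : ContDiff ℝ 1 x)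
    (hadm : IsAdmissible A t₀ t₁ x y) :
    IsLagrangeSolution A (fun p => ∑ α, anchorDiff A f α p.1 * p.2 α) t₀ t₁ x y := by
  intro α t htI
  have hg : ∀ β, Differentiable ℝ (anchorDiff A f β) := fun β =>
    (contDiff_anchorDiff A hf β).differentiable (by simp)
  simp only [pLy_linear, pLx_linear hg]
  rw [deriv_comp_curve (hg α _) (hx.differentiable (by simp) t)]
  simp only [hadm t htI]
  have h1 : ∑ j, pderiv' (anchorDiff A f α) (x t) j * ∑ β, A.ρ (x t) j β * y t β
      = ∑ β, y t β * ∑ j, A.ρ (x t) j β * pderiv' (anchorDiff A f α) (x t) j := by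
    simp only [Finset.mul_sum]
    rw [Finset.sum_comm]
    exact Finset.sum_congr rfl fun i _ => Finset.sum_congr rfl fun γ _ => by ring
  have h2 : ∑ i, A.ρ (x t) i α * ∑ β, pderiv' (anchorDiff A f β) (x t) i * y t β
      = ∑ β, y t β * ∑ j, A.ρ (x t) j α * pderiv' (anchorDiff A f β) (x t) j := by
    simp only [Finset.mul_sum]
    rw [Finset.sum_comm]
    exact Finset.sum_congr rfl fun i _ => Finset.sum_congr rfl fun γ _ => by ring
  have h3 : ∑ β, ∑ γ, A.C (x t) γ α β * y t β * anchorDiff A f γ (x t)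
      = ∑ β, y t β * ∑ γ, A.C (x t) γ α β * anchorDiff A f γ (x t) := by
    simp only [Finset.mul_sum]
    exact Finset.sum_congr rfl fun i _ => Finset.sum_congr rfl fun γ _ => by ring
  rw [h1, h2, h3, ← Finset.sum_add_distrib]
  refine Finset.sum_congr rfl fun β _ => ?_
  rw [← mul_add, bracket_identity A hA hf]

/-- For a `C²` Lagrangian the momenta `∂L/∂y^α` are differentiable along a `C¹` curve. -/
lemma differentiable_pLy_curve {n m : ℕ} {L : (Fin n → ℝ) × (Fin m → ℝ) → ℝ}
    (hL : ContDiff ℝ 2 L) {x : ℝ → Fin n → ℝ} {y : ℝ → Fin m → ℝ} (hx : ContDiff ℝ 1 x)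
    (hy : ContDiff ℝ 1 y) (α : Fin m) : Differentiable ℝ (fun s => pLy L (x s) (y s) α) := by
  have h : (fun s => pLy L (x s) (y s) α)
      = fun s => fderiv ℝ L (x s, y s) (0, Pi.single α 1) := by
    funext s
    have hd : DifferentiableAt ℝ L (x s, y s) := hL.differentiable (by simp) _
    unfold pLy
    have hc := hd.hasFDerivAt.comp (y s) (hasFDerivAt_prodMk_right (𝕜 := ℝ) (x s) (y s))
    have hc' : HasFDerivAt (fun w => L (x s, w)) _ (y s) := hc
    rw [pderiv'_eq_fderiv hc'.differentiableAt, hc'.fderiv]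
    simp
  rw [h]
  have h1 : ContDiff ℝ 1 (fderiv ℝ L) := hL.fderiv_right (by norm_num)
  have h2 := h1.comp (hx.prodMk hy)
  exact (h2.clm_apply contDiff_const).differentiable (by simp)

lemma pLy_add {n m : ℕ} {L M : (Fin n → ℝ) × (Fin m → ℝ) → ℝ} (hL : Differentiable ℝ L)
    (hM : Differentiable ℝ M) (x : Fin n → ℝ) (y : Fin m → ℝ) (α : Fin m) :
    pLy (fun p => L p + M p) x y α = pLy L x y α + pLy M x y α :=
  pderiv'_add (f := fun w => L (x, w)) (g := fun w => M (x, w)) (by fun_prop) (by fun_prop) α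

lemma pLx_add {n m : ℕ} {L M : (Fin n → ℝ) × (Fin m → ℝ) → ℝ} (hL : Differentiable ℝ L)
    (hM : Differentiable ℝ M) (x : Fin n → ℝ) (y : Fin m → ℝ) (i : Fin n) :
    pLx (fun p => L p + M p) x y i = pLx L x y i + pLx M x y i :=
  pderiv'_add (f := fun z => L (z, y)) (g := fun z => M (z, y)) (by fun_prop) (by fun_prop) i

/-- Adding a Lagrangian `M` whose equations hold along the curve does not change Lagrange's
equations for that curve. -/
lemma isLagrangeSolution_add_iff {n m : ℕ} (A : LocalAlgebroidData n m)
    {L M : (Fin n → ℝ) × (Fin m → ℝ) → ℝ} (hL : ContDiff ℝ 2 L) (hM : ContDiff ℝ 2 M)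
    {t₀ t₁ : ℝ} {x : ℝ → Fin n → ℝ} {y : ℝ → Fin m → ℝ} (hx : ContDiff ℝ 1 x)
    (hy : ContDiff ℝ 1 y) (hsol : IsLagrangeSolution A M t₀ t₁ x y) :
    IsLagrangeSolution A L t₀ t₁ x y ↔
      IsLagrangeSolution A (fun p => L p + M p) t₀ t₁ x y := by
  refine forall_congr' fun α => forall_congr' fun t => forall_congr' fun htI => ?_
  have h := hsol α t htI
  have hLd := hL.differentiable (by simp)
  have hMd := hM.differentiable (by simp)
  simp only [pLy_add hLd hMd, pLx_add hLd hMd, mul_add, Finset.sum_add_distrib]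
  rw [deriv_fun_add (differentiable_pLy_curve hL hx hy α t)
    (differentiable_pLy_curve hM hx hy α t)]
  constructor <;> intro h' <;> linarith

/-- **Gauge invariance under total derivatives (coordinate form).**  For smooth
`f : ℝ^n → ℝ`, the "total time derivative" Lagrangian
`ΔL(x,y) = Σ_{i,α} ∂f/∂x^i(x) ρ^i_α(x) y^α` has identically vanishing Euler–Lagrange
expression along every admissible C¹ curve; consequently, for any C² Lagrangian `L`,
the solutions of Lagrange's equations for `L` and for `L + ΔL` coincide. -/
theorem gauge_invariance_total_derivative
    {n m : ℕ} (A : LocalAlgebroidData n m) (hA : FirstStructureEq A)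
    (f : (Fin n → ℝ) → ℝ) (hf : ContDiff ℝ (⊤ : ℕ∞) f)
    (t₀ t₁ : ℝ) (ht : t₀ < t₁) :
    (∀ (x : ℝ → Fin n → ℝ) (y : ℝ → Fin m → ℝ),
      ContDiff ℝ 1 x → ContDiff ℝ 1 y → IsAdmissible A t₀ t₁ x y →
      IsLagrangeSolution A
        (fun p => ∑ i, ∑ α, pderiv' f p.1 i * A.ρ p.1 i α * p.2 α) t₀ t₁ x y)
    ∧ (∀ (L : (Fin n → ℝ) × (Fin m → ℝ) → ℝ), ContDiff ℝ 2 L →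
        ∀ (x : ℝ → Fin n → ℝ) (y : ℝ → Fin m → ℝ),
        ContDiff ℝ 1 x → ContDiff ℝ 1 y → IsAdmissible A t₀ t₁ x y →
        (IsLagrangeSolution A L t₀ t₁ x y ↔
          IsLagrangeSolution A
            (fun p => L p + ∑ i, ∑ α, pderiv' f p.1 i * A.ρ p.1 i α * p.2 α)
            t₀ t₁ x y)) := by
  simp only [totalDeriv_eq]
  have hM : ContDiff ℝ 2 (fun p : (Fin n → ℝ) × (Fin m → ℝ) =>
      ∑ α, anchorDiff A f α p.1 * p.2 α) := by
    refine ContDiff.sum fun α _ => ?_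
    have h1 : ContDiff ℝ 2 (anchorDiff A f α) :=
      (contDiff_anchorDiff A hf α).of_le two_le_smooth
    fun_prop
  refine ⟨fun x y hx _ hadm => totalDeriv_isLagrangeSolution A hA hf hx hadm,
    fun L hL x y hx hy hadm => ?_⟩
  exact isLagrangeSolution_add_iff A hL hM hx hy
    (totalDeriv_isLagrangeSolution A hA hf hx hadm)
end

section
/- The spinning-top relative equilibrium admits no Lagrange multiplier on the sphere version of the heavy top: let I be a 3×3 real matrix, e ∈ ℝ³ with e ≠ 0, λ ∈ ℝ with λ ≠ 0 and I e = λ • e, and let ε ∈ {1, −1}. Then there exists no p ∈ ℝ³ such that p × (ε • e) = I e. (In other words, at the relative equilibrium γ = ±e, ω = e, the restriction p × γ = I ω imposed on normal solutions of the Lagrange multiplier method has no solution p, so this solution of the Euler–top equations is not obtained by the heuristic Lagrange multiplier method.) -/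
open Matrix

/-- **The spinning-top relative equilibrium admits no Lagrange multiplier on the
sphere version of the heavy top.**  If `e ≠ 0` is an eigenvector of the inertia
tensor `I` with nonzero eigenvalue `λ` and `ε = ±1`, then there is no `p ∈ ℝ³` with
`p × (ε • e) = I e`; i.e. at the relative equilibrium `γ = ±e`, `ω = e`, the
restriction `p × γ = I ω` on normal multiplier solutions has no solution. -/
theorem spinning_top_no_multiplier
    (I : Matrix (Fin 3) (Fin 3) ℝ) (e : Fin 3 → ℝ) (he : e ≠ 0)
    (lam : ℝ) (hlam : lam ≠ 0) (heig : I.mulVec e = lam • e)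
    (ε : ℝ) (hε : ε = 1 ∨ ε = -1) :
    ¬ ∃ p : Fin 3 → ℝ, crossProduct p (ε • e) = I.mulVec e := by
  rintro ⟨p, hp⟩
  -- `p × (ε • e)` is orthogonal to `e`, so pairing `hp` with `e` gives `0 = lam * (e ⬝ᵥ e)`.
  have h := congrArg (fun v => e ⬝ᵥ v) hp
  simp only [heig, map_smul, dotProduct_smul, dot_cross_self, smul_eq_mul, mul_zero] at h
  exact mul_ne_zero hlam (fun h0 => he (dotProduct_self_eq_zero.mp h0)) h.symm
end

section
/- Variational characterization of the Euler–top equations: let I be a symmetric 3×3 real matrix, e ∈ ℝ³, and let γ, ω : [t₀,t₁] → ℝ³ (t₀ < t₁) be C¹ curves satisfying the advection equation γ'(t) = γ(t) × ω(t) on [t₀,t₁]. Then the following are equivalent: (a) for every C¹ map σ : [t₀,t₁] → ℝ³ with σ(t₀) = 0 and σ(t₁) = 0 one has ∫_{t₀}^{t₁} [ (I ω(t)) · ( σ'(t) + ω(t) × σ(t) ) − e · ( γ(t) × σ(t) ) ] dt = 0; (b) I ω'(t) + ω(t) × (I ω(t)) = γ(t) × e for all t ∈ [t₀,t₁]. (Condition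 (a) states that the first variation of the action of the heavy top Lagrangian L(γ,ω) = ½ ω · Iω − γ · e vanishes for all admissible variations δγ = γ × σ, δω = σ' + ω × σ with σ vanishing at the endpoints.) -/
open Matrix Set

/-!
Put `F = I ω' + ω × (I ω) − γ × e`. The product rule and the cyclic symmetry of the triple product
show that the integrand of the first variation is `(I ω · σ)' − F · σ`
(`eulerTop_integrand_eq`), so for `σ` vanishing at the endpoints the first variation equals
`−∫ F · σ` (`eulerTop_firstVariation_eq`). Hence `F = 0` makes it vanish. Conversely, testing with
`σ = g • eᵢ` for smooth `g` compactly supported in `(t₀, t₁)`, the fundamental lemma of the calculus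
of variations gives `Fᵢ = 0` almost everywhere on `(t₀, t₁)`, hence on `[t₀, t₁]` by continuity.
-/

/-- The residual `I ω' + ω × (I ω) − γ × e` of the Euler–top equation. -/
noncomputable def eulerTopResidual (I : Matrix (Fin 3) (Fin 3) ℝ) (e : Fin 3 → ℝ)
    (γ ω : ℝ → Fin 3 → ℝ) (t : ℝ) : Fin 3 → ℝ :=
  I.mulVec (deriv ω t) + crossProduct (ω t) (I.mulVec (ω t)) - crossProduct (γ t) e

lemma continuous_crossProduct {f g : ℝ → Fin 3 → ℝ} (hf : Continuous f) (hg : Continuous g) :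
    Continuous fun t => crossProduct (f t) (g t) := by
  refine continuous_pi fun i => ?_
  fin_cases i <;> simp [cross_apply] <;> fun_prop

lemma continuous_eulerTopResidual (I : Matrix (Fin 3) (Fin 3) ℝ) (e : Fin 3 → ℝ)
    {γ ω : ℝ → Fin 3 → ℝ} (hγ : Continuous γ) (hω : ContDiff ℝ 1 ω) :
    Continuous (eulerTopResidual I e γ ω) := by
  have hd : Continuous (deriv ω) := hω.continuous_deriv le_rfl
  have hIω : Continuous fun t => I.mulVec (ω t) := continuous_const.matrix_mulVec hω.continuous
  exact ((continuous_const.matrix_mulVec hd).add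
    (continuous_crossProduct hω.continuous hIω)).sub
    (continuous_crossProduct hγ continuous_const)

lemma eulerTop_integrand_eq (I : Matrix (Fin 3) (Fin 3) ℝ) (e : Fin 3 → ℝ)
    (γ ω σ : ℝ → Fin 3 → ℝ) (t : ℝ) :
    (I.mulVec (ω t)) ⬝ᵥ (deriv σ t + crossProduct (ω t) (σ t)) - e ⬝ᵥ (crossProduct (γ t) (σ t))
      = (I.mulVec (deriv ω t) ⬝ᵥ σ t + I.mulVec (ω t) ⬝ᵥ deriv σ t)
        - eulerTopResidual I e γ ω t ⬝ᵥ σ t := by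
  unfold eulerTopResidual
  generalize I.mulVec (ω t) = m
  generalize I.mulVec (deriv ω t) = m'
  simp only [vec3_dotProduct, cross_apply, Pi.add_apply, Pi.sub_apply, cons_val]
  ring

lemma hasDerivAt_mulVec_dotProduct (I : Matrix (Fin 3) (Fin 3) ℝ) {ω σ : ℝ → Fin 3 → ℝ} {t : ℝ}
    (hω : DifferentiableAt ℝ ω t) (hσ : DifferentiableAt ℝ σ t) :
    HasDerivAt (fun s => I.mulVec (ω s) ⬝ᵥ σ s)
      (I.mulVec (deriv ω t) ⬝ᵥ σ t + I.mulVec (ω t) ⬝ᵥ deriv σ t) t := by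
  have h1 := hasDerivAt_pi.1 hω.hasDerivAt
  have h2 := hasDerivAt_pi.1 hσ.hasDerivAt
  simp only [dotProduct, mulVec, ← Finset.sum_add_distrib]
  exact HasDerivAt.fun_sum fun i _ =>
    (HasDerivAt.fun_sum fun j _ => (h1 j).const_mul (I i j)).mul (h2 i)

lemma eulerTop_firstVariation_eq (I : Matrix (Fin 3) (Fin 3) ℝ) (e : Fin 3 → ℝ) (t₀ t₁ : ℝ)
    {γ ω σ : ℝ → Fin 3 → ℝ} (hγ : Continuous γ) (hω : ContDiff ℝ 1 ω) (hσ : ContDiff ℝ 1 σ)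
    (h₀ : σ t₀ = 0) (h₁ : σ t₁ = 0) :
    ∫ t in t₀..t₁, ((I.mulVec (ω t)) ⬝ᵥ (deriv σ t + crossProduct (ω t) (σ t))
        - e ⬝ᵥ (crossProduct (γ t) (σ t)))
      = -∫ t in t₀..t₁, eulerTopResidual I e γ ω t ⬝ᵥ σ t := by
  have hdω : Continuous (deriv ω) := hω.continuous_deriv le_rfl
  have hdσ : Continuous (deriv σ) := hσ.continuous_deriv le_rfl
  have hc : Continuous fun t => I.mulVec (deriv ω t) ⬝ᵥ σ t + I.mulVec (ω t) ⬝ᵥ deriv σ t :=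
    ((continuous_const.matrix_mulVec hdω).dotProduct hσ.continuous).add
      ((continuous_const.matrix_mulVec hω.continuous).dotProduct hdσ)
  have hF : Continuous fun t => eulerTopResidual I e γ ω t ⬝ᵥ σ t :=
    (continuous_eulerTopResidual I e hγ hω).dotProduct hσ.continuous
  simp_rw [eulerTop_integrand_eq]
  rw [intervalIntegral.integral_sub (hc.intervalIntegrable _ _) (hF.intervalIntegrable _ _),
    intervalIntegral.integral_eq_sub_of_hasDerivAt
      (fun t _ => hasDerivAt_mulVec_dotProduct I (hω.differentiable one_ne_zero t)
        (hσ.differentiable one_ne_zero t)) (hc.intervalIntegrable _ _)]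
  simp [h₀, h₁]

/-- The fundamental lemma of the calculus of variations for a continuous vector-valued function,
tested against C¹ functions vanishing at the endpoints. -/
lemma eqOn_zero_of_integral_dotProduct_eq_zero {t₀ t₁ : ℝ} (ht : t₀ < t₁) {F : ℝ → Fin 3 → ℝ}
    (hF : Continuous F)
    (h : ∀ σ : ℝ → Fin 3 → ℝ, ContDiff ℝ 1 σ → σ t₀ = 0 → σ t₁ = 0 →
      ∫ t in t₀..t₁, F t ⬝ᵥ σ t = 0) :
    ∀ t ∈ Icc t₀ t₁, F t = 0 := by
  intro t htI
  ext i
  have hFi : Continuous fun s => F s i := (continuous_apply i).comp hF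
  have hae : ∀ᵐ s, s ∈ Ioo t₀ t₁ → F s i = 0 := by
    refine isOpen_Ioo.ae_eq_zero_of_integral_contDiff_smul_eq_zero
      (hFi.locallyIntegrable.locallyIntegrableOn _) fun g hg _ hsupp => ?_
    have hg0 : ∀ s, s ∉ Ioo t₀ t₁ → g s = 0 := fun s hs =>
      image_eq_zero_of_notMem_tsupport fun hs' => hs (hsupp hs')
    have key := h (fun s => g s • Pi.single i 1) ((hg.of_le (by simp)).smul contDiff_const)
      (by simp [hg0]) (by simp [hg0])
    rw [intervalIntegral.integral_of_le ht.le,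
      MeasureTheory.setIntegral_eq_integral_of_forall_compl_eq_zero] at key
    · simpa [dotProduct_smul] using key
    · intro s hs
      simp [hg0 s fun hs' => hs (Ioo_subset_Ioc_self hs')]
  have hae' : (fun s => F s i) =ᵐ[MeasureTheory.volume.restrict (Icc t₀ t₁)] fun _ => 0 := by
    rw [← MeasureTheory.restrict_Ioo_eq_restrict_Icc]
    exact (MeasureTheory.ae_restrict_iff' measurableSet_Ioo).2 hae
  exact MeasureTheory.Measure.eqOn_Icc_of_ae_eq _ ht.ne hae' hFi.continuousOn continuousOn_const htI

/-- **Variational characterization of the Euler–top equations.**  For a symmetric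
inertia tensor `I`, C¹ curves `γ, ω` satisfying the advection equation `γ' = γ × ω`
on `[t₀,t₁]`, the first variation of the action of the heavy top Lagrangian
`L(γ,ω) = ½ ω·Iω − γ·e` vanishes for all admissible variations `δγ = γ × σ`,
`δω = σ' + ω × σ` with `σ(t₀) = σ(t₁) = 0` if and only if the Euler–top equation
`I ω' + ω × (I ω) = γ × e` holds on `[t₀,t₁]`. -/
theorem euler_top_variational_characterization
    (I : Matrix (Fin 3) (Fin 3) ℝ) (hI : I.IsSymm) (e : Fin 3 → ℝ)
    (t₀ t₁ : ℝ) (ht : t₀ < t₁)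
    (γ ω : ℝ → Fin 3 → ℝ) (hγ : ContDiff ℝ 1 γ) (hω : ContDiff ℝ 1 ω)
    (hadv : ∀ t ∈ Icc t₀ t₁, deriv γ t = crossProduct (γ t) (ω t)) :
    (∀ σ : ℝ → Fin 3 → ℝ, ContDiff ℝ 1 σ → σ t₀ = 0 → σ t₁ = 0 →
      ∫ t in t₀..t₁,
        ((I.mulVec (ω t)) ⬝ᵥ (deriv σ t + crossProduct (ω t) (σ t))
          - e ⬝ᵥ (crossProduct (γ t) (σ t))) = 0)
    ↔ (∀ t ∈ Icc t₀ t₁,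
        I.mulVec (deriv ω t) + crossProduct (ω t) (I.mulVec (ω t))
          = crossProduct (γ t) e) := by
  have hvar := fun (σ : ℝ → Fin 3 → ℝ) (hσ : ContDiff ℝ 1 σ) =>
    eulerTop_firstVariation_eq I e t₀ t₁ hγ.continuous hω hσ
  constructor
  · intro h t htI
    refine sub_eq_zero.1 (eqOn_zero_of_integral_dotProduct_eq_zero ht
      (continuous_eulerTopResidual I e hγ.continuous hω) (fun σ hσ h₀ h₁ => ?_) t htI)
    rw [← neg_eq_zero, ← hvar σ hσ h₀ h₁]
    exact h σ hσ h₀ h₁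
  · intro h σ hσ h₀ h₁
    rw [hvar σ hσ h₀ h₁, neg_eq_zero]
    refine intervalIntegral.integral_zero_ae (.of_forall fun t htI => ?_)
    rw [uIoc_of_le ht.le] at htI
    have h0 : eulerTopResidual I e γ ω t = 0 := sub_eq_zero.2 (h t (Ioc_subset_Icc_self htI))
    rw [h0, zero_dotProduct]
end
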